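/- arXiv:1308.3955 — 4 statements merged into one kernel-verified Lean document; each statement's English description precedes it below -/
import Mathlib

section
/- Let G = (A * B; H = K, φ) be the generalized free product of groups A and B with subgroups H ≤ A and K ≤ B amalgamated according to an isomorphism φ: H → K. Suppose H is a normal subgroup of A, K is a normal subgroup of B, and the groups H and K satisfy the maximum condition for subgroups. If A and B are subgroup separable, then G is subgroup separable. -/
/-- A subgroup `H` of a group `G` is finitely separable if for every `g ∈ G` with `g ∉ H`
there is a homomorphism of `G` onto a finite group under which the image of `g` does not
belong to the image of `H`. -/
def FinitelySeparable {G : Type*} [Group G] (H : Subgroup G) : Prop :=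
  ∀ g : G, g ∉ H →
    ∃ (Q : Type) (_ : Group Q) (_ : Finite Q) (f : G →* Q),
      Function.Surjective f ∧ f g ∉ H.map f

/-- A group is subgroup separable if all of its finitely generated subgroups are
finitely separable. -/
def SubgroupSeparable (G : Type*) [Group G] : Prop :=
  ∀ H : Subgroup G, H.FG → FinitelySeparable H

/-- A group satisfies the maximum condition for subgroups if every ascending chain of
subgroups stabilizes. -/
def MaxConditionOnSubgroups (G : Type*) [Group G] : Prop :=
  ∀ f : ℕ →o Subgroup G, ∃ n : ℕ, ∀ m : ℕ, n ≤ m → f m = f n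

/-- The two factors of the generalized free product, indexed by `Bool`. -/
abbrev amalgFactor (A B : Type) : Bool → Type
  | true => A
  | false => B

instance (A B : Type) [Group A] [Group B] : ∀ b, Group (amalgFactor A B b)
  | true => ‹Group A›
  | false => ‹Group B›

/-- The pair of maps identifying the amalgamated subgroup `H = K` inside the two factors:
the inclusion `H ↪ A` and the composition of `φ : H ≃ K` with the inclusion `K ↪ B`. -/
def amalgMaps {A B : Type} [Group A] [Group B] (H : Subgroup A) (K : Subgroup B)
    (φ : H ≃* K) : ∀ b, ↥H →* amalgFactor A B b
  | true => H.subtype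
  | false => K.subtype.comp φ.toMonoidHom

/-- The generalized free product `(A ∗ B; H = K, φ)`, i.e. the amalgamated free product
(pushout) of `A` and `B` over `H` identified with `K` via `φ`. -/
abbrev AmalgamatedProduct {A B : Type} [Group A] [Group B] (H : Subgroup A) (K : Subgroup B)
    (φ : H ≃* K) : Type :=
  Monoid.PushoutI (amalgMaps H K φ)

/-!
A finitely generated subgroup `M` of `G` is separable as soon as every finite part of the `G`-set
`G ⧸ M` embeds into a finite `G`-set; conversely, if `G` is subgroup separable, then finite parts
of arbitrary `G`-sets embed into finite ones, since only finitely many Schreier generators of a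
point stabilizer are involved.

Let `G` be the amalgam of the `A j` over a finite group `C`. Residual finiteness of the factors
gives a finite `G`-set `Z` on which `C` acts freely, and it suffices to embed finite parts of
`Y × Z` for a `G`-set `Y`. Do this in a finite `A j`-set for each `j` separately, with `C` acting
freely. After passing to multiples of equal cardinality, these sets become isomorphic as `C`-sets
relative to the given finite part, because the complement is a sum of free orbits. Identifying
them along such isomorphisms makes all the `A j` act on one finite set, compatibly on `C`.

In general let `g ∉ M`. As `C` is normal in `G`, subgroup separable and has the maximum condition,
there is a characteristic subgroup `L` of finite index in `C` with `g ∉ M L`. It is normal in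
every `A j`, and factoring it out leads to the amalgam of the groups `A j ⧸ L` over the finite
group `C ⧸ L`.
-/

open Function Monoid
open scoped Pointwise

variable {G : Type*} [Group G]

section Separability

theorem finitelySeparable_iff_exists_finiteIndex {H : Subgroup G} :
    FinitelySeparable H ↔ ∀ g ∉ H, ∃ N : Subgroup G, N.FiniteIndex ∧ H ≤ N ∧ g ∉ N := by
  refine forall₂_congr fun g _ => ⟨?_, ?_⟩
  · rintro ⟨Q, _, _, f, hf, hg⟩
    refine ⟨(H.map f).comap f, ⟨?_⟩, H.le_comap_map f, hg⟩
    rw [Subgroup.index_comap_of_surjective _ hf]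
    exact Subgroup.FiniteIndex.index_ne_zero
  · rintro ⟨N, _, hHN, hg⟩
    let e : Shrink.{0} (G ⧸ N.normalCore) ≃* G ⧸ N.normalCore := Shrink.mulEquiv
    refine ⟨Shrink.{0} (G ⧸ N.normalCore), inferInstance, inferInstance,
      e.symm.toMonoidHom.comp (QuotientGroup.mk' N.normalCore),
      e.symm.surjective.comp (QuotientGroup.mk'_surjective _), ?_⟩
    rintro ⟨h, hh, heq⟩
    have hmem : h⁻¹ * g ∈ N.normalCore := QuotientGroup.eq.1 (e.symm.injective heq)
    exact hg ((N.mul_mem_cancel_left (N.inv_mem (hHN hh))).1 (N.normalCore_le hmem))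

theorem subgroup_fg_map {G' : Type*} [Group G'] {H : Subgroup G} (hH : H.FG) (f : G →* G') :
    (H.map f).FG :=
  (Subgroup.fg_iff_submonoid_fg _).2 (((Subgroup.fg_iff_submonoid_fg H).1 hH).map f)

theorem subgroup_fg_comap {G' : Type*} [Group G'] {H : Subgroup G'} (hH : H.FG) {f : G →* G'}
    (hf : Surjective f) (hker : f.ker.FG) : (H.comap f).FG := by
  classical
  obtain ⟨S, rfl⟩ := hH
  have hlift : (Subgroup.closure (surjInv hf '' (S : Set G'))).map f = Subgroup.closure S := by
    rw [MonoidHom.map_closure, ← Set.image_comp, (rightInverse_surjInv hf).comp_eq_id,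
      Set.image_id]
  rw [← hlift, Subgroup.comap_map_eq, ← Finset.coe_image]
  exact Subgroup.FG.sup ⟨_, rfl⟩ hker

theorem subgroupSeparable_of_exists_hom
    (h : ∀ H : Subgroup G, H.FG → ∀ g ∉ H, ∃ (G' : Type*) (_ : Group G') (f : G →* G'),
      SubgroupSeparable G' ∧ f g ∉ H.map f) : SubgroupSeparable G := by
  refine fun H hH => finitelySeparable_iff_exists_finiteIndex.2 fun g hg => ?_
  obtain ⟨G', _, f, hG', hfg⟩ := h H hH g hg
  obtain ⟨N, _, hHN, hgN⟩ :=
    finitelySeparable_iff_exists_finiteIndex.1 (hG' _ (subgroup_fg_map hH f)) _ hfg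
  refine ⟨N.comap f, ⟨?_⟩, Subgroup.map_le_iff_le_comap.1 hHN, hgN⟩
  rw [Subgroup.index_comap]
  exact Subgroup.FiniteIndex.index_ne_zero (H := N.subgroupOf f.range)

namespace SubgroupSeparable

variable {G' : Type*} [Group G']

theorem of_injective (hG' : SubgroupSeparable G') {f : G →* G'} (hf : Injective f) :
    SubgroupSeparable G :=
  subgroupSeparable_of_exists_hom fun _ _ _ hg =>
    ⟨G', inferInstance, f, hG', by rwa [Subgroup.mem_map_iff_mem hf]⟩

theorem of_surjective (hG : SubgroupSeparable G) {f : G →* G'} (hf : Surjective f)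
    (hker : f.ker.FG) : SubgroupSeparable G' := by
  refine fun H hH => finitelySeparable_iff_exists_finiteIndex.2 fun g' hg' => ?_
  obtain ⟨g, rfl⟩ := hf g'
  obtain ⟨N, _, hHN, hgN⟩ := finitelySeparable_iff_exists_finiteIndex.1
    (hG _ (subgroup_fg_comap hH hf hker)) g hg'
  have hkerN : f.ker ≤ N := (Subgroup.ker_le_comap f H).trans hHN
  refine ⟨N.map f, ⟨?_⟩, ?_, ?_⟩
  · rw [Subgroup.index_map_eq N hf hkerN]
    exact Subgroup.FiniteIndex.index_ne_zero
  · exact (Subgroup.map_comap_eq_self_of_surjective hf H).ge.trans (Subgroup.map_mono hHN)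
  · rwa [← Subgroup.mem_comap, Subgroup.comap_map_eq_self hkerN]

theorem residuallyFinite (hG : SubgroupSeparable G) : Group.ResiduallyFinite G := by
  refine Group.residuallyFinite_iff_exists_finiteIndex.2 fun g hg => ?_
  obtain ⟨N, hN, -, hgN⟩ :=
    finitelySeparable_iff_exists_finiteIndex.1 (hG ⊥ Subgroup.FG.bot) g (by simpa using hg)
  exact ⟨N, hN, hgN⟩

end SubgroupSeparable

theorem MaxConditionOnSubgroups.fg (hG : MaxConditionOnSubgroups G) (K : Subgroup G) : K.FG := by
  have : WellFoundedGT (Subgroup G) := wellFoundedGT_iff_monotone_chain_condition.2 fun f =>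
    (hG f).imp fun n hn m hm => (hn m hm).symm
  obtain ⟨t, ht, htK⟩ :=
    CompleteLattice.WellFoundedGT.isSupFiniteCompact _ {P : Subgroup G | P.FG ∧ P ≤ K}
  have hKle : K ≤ t.sup id := fun k hk => htK ▸
    have hfg : (Subgroup.zpowers k).FG :=
      ⟨{k}, by rw [Finset.coe_singleton, Subgroup.zpowers_eq_closure]⟩
    le_sSup (show _ ∈ {P : Subgroup G | P.FG ∧ P ≤ K} from ⟨hfg, Subgroup.zpowers_le.2 hk⟩)
      (Subgroup.mem_zpowers k)
  rw [hKle.antisymm (Finset.sup_le fun P hP => (ht hP).2)]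
  exact Subgroup.FG.finset_sup t id fun P hP => (ht hP).1

end Separability

section FiniteApproximation

variable {Y : Type*}

/-- `i` commutes with the action along the edges `y ⟶ g • y`, `(g, y) ∈ E`, of the action
graph of `Y`. -/
def EquivariantOn {X : Type*} [SMul G Y] [SMul G X] (E : Set (G × Y)) (i : Y → X) : Prop :=
  ∀ p ∈ E, i (p.1 • p.2) = p.1 • i p.2

variable [MulAction G Y]

/-- The part of the `G`-set `Y` given by the points of `S` and the edges of `E` (encoded as in
`EquivariantOn`) can be realised inside a finite `G`-set. -/
def HasFiniteApproximation (S : Set Y) (E : Set (G × Y)) : Prop :=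
  ∃ (X : Type) (_ : Finite X) (_ : MulAction G X) (i : Y → X), S.InjOn i ∧ EquivariantOn E i

variable (G Y) in
/-- Every finite part of the `G`-set `Y` can be realised inside a finite `G`-set. -/
def FinitelyApproximable : Prop :=
  ∀ (S : Set Y) (E : Set (G × Y)), S.Finite → E.Finite → HasFiniteApproximation S E

namespace HasFiniteApproximation

variable {S : Set Y} {E : Set (G × Y)}

theorem of_finite {X : Type*} [Finite X] [MulAction G X] {i : Y → X} (hinj : S.InjOn i)
    (hequiv : EquivariantOn E i) : HasFiniteApproximation S E := by
  refine ⟨Shrink.{0} X, inferInstance, inferInstance, fun y => equivShrink.{0} X (i y),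
    (equivShrink.{0} X).injective.comp_injOn hinj, fun p hp => ?_⟩
  simp only [hequiv p hp, equivShrink_smul]

theorem of_pairs (hS : S.Finite)
    (h : ∀ s ∈ S, ∀ t ∈ S, s ≠ t → HasFiniteApproximation {s, t} E) :
    HasFiniteApproximation S E := by
  have := hS.to_subtype
  choose X hX hact i hinj hequiv using
    fun p : {p : S × S // p.1 ≠ p.2} => h p.1.1 p.1.1.2 p.1.2 p.1.2.2 (Subtype.coe_ne_coe.2 p.2)
  refine of_finite (X := ∀ p, X p) (i := fun y p => i p y) (fun s hs t ht hst => ?_)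
    fun q hq => funext fun p => hequiv p q hq
  by_contra hne
  exact hne (hinj ⟨(⟨s, hs⟩, ⟨t, ht⟩), fun heq => hne (congrArg Subtype.val heq)⟩ (.inl rfl)
    (.inr rfl) (congrFun hst _))

end HasFiniteApproximation

open MulAction

theorem smul_mem_orbit_iff {g : G} {s y : Y} : g • y ∈ orbit G s ↔ y ∈ orbit G s := by
  rw [← orbit_eq_iff, orbit_smul, orbit_eq_iff]

open Classical in
/-- The coset `sec y * Q` if `y` lies in the orbit of `s`, and `none` otherwise. For a section
`sec` of the orbit map `g ↦ g • s` it serves to separate `s` from other points of `Y` in the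
`G`-set `Option (G ⧸ Q)`, finite if `Q` has finite index. -/
noncomputable def cosetMap (sec : Y → G) (s : Y) (Q : Subgroup G) (y : Y) : Option (G ⧸ Q) :=
  if y ∈ orbit G s then some (sec y : G ⧸ Q) else none

theorem equivariantOn_cosetMap {E : Set (G × Y)} {sec : Y → G} {s : Y} {Q : Subgroup G}
    (h : ∀ p ∈ E, p.2 ∈ orbit G s → (sec (p.1 • p.2))⁻¹ * (p.1 * sec p.2) ∈ Q) :
    EquivariantOn E (cosetMap sec s Q) := by
  intro p hp
  by_cases hp2 : p.2 ∈ orbit G s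
  · simp only [cosetMap, smul_mem_orbit_iff, hp2, if_true, Option.smul_some,
      MulAction.Quotient.smul_coe]
    exact congrArg some (QuotientGroup.eq.2 (h p hp hp2))
  · simp only [cosetMap, smul_mem_orbit_iff, hp2, if_false, Option.smul_none]

theorem SubgroupSeparable.exists_finiteIndex_cosetMap_ne (hG : SubgroupSeparable G)
    {sec : Y → G} {s t : Y} (hsec : ∀ y ∈ orbit G s, sec y • s = y) (hst : s ≠ t)
    {P : Subgroup G} (hP : P.FG) (hPs : P ≤ stabilizer G s) :
    ∃ Q : Subgroup G, Q.FiniteIndex ∧ P ≤ Q ∧ cosetMap sec s Q s ≠ cosetMap sec s Q t := by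
  by_cases ht : t ∈ orbit G s
  · have hnotMem : (sec s)⁻¹ * sec t ∉ P := fun hmem => hst <| by
      have hfix : ((sec s)⁻¹ * sec t) • s = s := hPs hmem
      rwa [mul_smul, hsec t ht, inv_smul_eq_iff, hsec s (mem_orbit_self s), eq_comm] at hfix
    obtain ⟨Q, hQ, hPQ, hQt⟩ := finitelySeparable_iff_exists_finiteIndex.1 (hG P hP) _ hnotMem
    refine ⟨Q, hQ, hPQ, fun heq => hQt ?_⟩
    simpa only [cosetMap, mem_orbit_self, ht, if_true, Option.some_inj, QuotientGroup.eq]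
      using heq
  · exact ⟨⊤, inferInstance, le_top, by simp [cosetMap, ht]⟩

theorem SubgroupSeparable.finitelyApproximable (hG : SubgroupSeparable G) :
    FinitelyApproximable G Y := by
  refine fun S E hS hE => .of_pairs hS fun s _ t _ hst => ?_
  have hex : ∀ y : Y, ∃ g : G, y ∈ orbit G s → g • s = y := fun y => by
    rcases em (y ∈ orbit G s) with ⟨g, hg⟩ | hy
    exacts [⟨g, fun _ => hg⟩, ⟨1, fun h => (hy h).elim⟩]
  choose sec hsec using hex
  let schreier : G × Y → G := fun p => (sec (p.1 • p.2))⁻¹ * (p.1 * sec p.2)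
  let P : Subgroup G := Subgroup.closure (schreier '' {p ∈ E | p.2 ∈ orbit G s})
  have hPfg : P.FG :=
    (Subgroup.fg_iff _).2 ⟨_, rfl, (hE.subset (Set.sep_subset _ _)).image schreier⟩
  have hPs : P ≤ stabilizer G s := by
    rw [Subgroup.closure_le]
    rintro _ ⟨p, ⟨-, hp⟩, rfl⟩
    rw [SetLike.mem_coe, mem_stabilizer_iff, mul_smul, mul_smul, hsec _ hp, inv_smul_eq_iff,
      hsec _ (smul_mem_orbit_iff.2 hp)]
  obtain ⟨Q, _, hPQ, hne⟩ := hG.exists_finiteIndex_cosetMap_ne hsec hst hPfg hPs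
  refine .of_finite (i := cosetMap sec s Q) ?_ ?_
  · rw [Set.injOn_pair]
    exact fun heq => (hne heq).elim
  · exact equivariantOn_cosetMap fun p hp hp2 =>
      hPQ (Subgroup.subset_closure (Set.mem_image_of_mem schreier ⟨hp, hp2⟩))

theorem FinitelyApproximable.exists_prodMap (hY : FinitelyApproximable G Y) {Z : Type*}
    [MulAction G Z] {S : Set (Y × Z)} {E : Set (G × (Y × Z))} (hS : S.Finite) (hE : E.Finite) :
    ∃ (X : Type) (_ : Finite X) (_ : MulAction G X) (i : Y → X),
      S.InjOn (Prod.map i id) ∧ EquivariantOn E (Prod.map i (id : Z → Z)) := by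
  obtain ⟨X, hX, hact, i, hinj, hequiv⟩ := hY (Prod.fst '' S) (Prod.map id Prod.fst '' E)
    (hS.image _) (hE.image _)
  refine ⟨X, hX, hact, i, fun v hv w hw hvw => ?_, fun p hp => ?_⟩
  · obtain ⟨hfst, hsnd⟩ := Prod.mk.inj hvw
    exact Prod.ext (hinj ⟨v, hv, rfl⟩ ⟨w, hw, rfl⟩ hfst) hsnd
  · exact Prod.ext (hequiv _ ⟨p, hp, rfl⟩) rfl

theorem finitelySeparable_of_finitelyApproximable {M : Subgroup G} (hM : M.FG)
    (h : FinitelyApproximable G (G ⧸ M)) : FinitelySeparable M := by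
  refine finitelySeparable_iff_exists_finiteIndex.2 fun g hg => ?_
  obtain ⟨T, rfl, hT⟩ := (Subgroup.fg_iff M).1 hM
  set M := Subgroup.closure T
  let o : G ⧸ M := (1 : G)
  have smul_o : ∀ k : G, k • o = o ↔ k ∈ M := fun k => by
    rw [← mem_stabilizer_iff, stabilizer_quotient]
  obtain ⟨X, _, _, i, hinj, hequiv⟩ := h {o, g • o} ((fun k => (k, o)) '' insert g T)
    (Set.toFinite _) ((hT.insert g).image _)
  have hi : ∀ k ∈ insert g T, i (k • o) = k • i o := fun k hk =>
    hequiv _ (Set.mem_image_of_mem _ hk)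
  refine ⟨stabilizer G (i o), ⟨?_⟩, (Subgroup.closure_le _).2 fun k hk => ?_, fun hgN => hg ?_⟩
  · rw [index_stabilizer]
    exact (nonempty_orbit (M := G) (i o)).ncard_pos.ne'
  · rw [SetLike.mem_coe, mem_stabilizer_iff, ← hi k (.inr hk),
      (smul_o k).2 (Subgroup.subset_closure hk)]
  · rw [mem_stabilizer_iff, ← hi g (.inl rfl)] at hgN
    exact (smul_o g).1 (hinj (.inr rfl) (.inl rfl) hgN)

theorem exists_finite_edges_of_mem_closure {L : Set G} {g : G} (hg : g ∈ Submonoid.closure L)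
    (y : Y) : ∃ E : Set (G × Y), E.Finite ∧ E ⊆ L ×ˢ Set.univ ∧
      ∀ (X : Type) [MulAction G X] (i : Y → X), EquivariantOn E i → i (g • y) = g • i y := by
  induction hg using Submonoid.closure_induction generalizing y with
  | mem g hg => exact ⟨{(g, y)}, Set.finite_singleton _,
      Set.singleton_subset_iff.2 ⟨hg, trivial⟩, fun X _ i hi => hi _ rfl⟩
  | one => exact ⟨∅, Set.finite_empty, Set.empty_subset _, fun X _ i _ => by simp only [one_smul]⟩
  | mul g h _ _ ihg ihh =>
    obtain ⟨E₁, hE₁, hL₁, hi₁⟩ := ihg (h • y)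
    obtain ⟨E₂, hE₂, hL₂, hi₂⟩ := ihh y
    refine ⟨E₁ ∪ E₂, hE₁.union hE₂, Set.union_subset hL₁ hL₂, fun X _ i hi => ?_⟩
    rw [mul_smul, mul_smul, hi₁ X i fun p hp => hi p (.inl hp),
      hi₂ X i fun p hp => hi p (.inr hp)]

namespace FinitelyApproximable

theorem of_closure_eq_top {L : Set G} (hL : Submonoid.closure L = ⊤)
    (h : ∀ (S : Set Y) (E : Set (G × Y)), S.Finite → E.Finite → E ⊆ L ×ˢ Set.univ →
      HasFiniteApproximation S E) : FinitelyApproximable G Y := by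
  intro S E hS hE
  choose E' hE' hE'L hcontrol using fun p : G × Y =>
    exists_finite_edges_of_mem_closure (hL ▸ Submonoid.mem_top p.1) p.2
  obtain ⟨X, hX, hact, i, hinj, hequiv⟩ := h S (⋃ p ∈ E, E' p) hS (hE.biUnion fun p _ => hE' p)
    (Set.iUnion₂_subset fun p _ => hE'L p)
  exact ⟨X, hX, hact, i, hinj, fun p hp =>
    hcontrol p X i fun q hq => hequiv q (Set.mem_biUnion hp hq)⟩

theorem of_invariant (N : Subgroup G) [Finite N] {L : Set G} (hL : Submonoid.closure L = ⊤)
    (h : ∀ (S : Set Y) (E : Set (G × Y)), S.Finite → E.Finite → (∀ n ∈ N, ∀ y ∈ S, n • y ∈ S) →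
      E ⊆ L ×ˢ Set.univ → (∀ p ∈ E, p.2 ∈ S ∧ p.1 • p.2 ∈ S) → HasFiniteApproximation S E) :
    FinitelyApproximable G Y := by
  refine .of_closure_eq_top hL fun S E hS hE hEL => ?_
  let S₁ : Set Y := S ∪ (Prod.snd '' E ∪ (fun p => p.1 • p.2) '' E)
  have hS₁ : S₁.Finite := hS.union ((hE.image _).union (hE.image _))
  have hsub : S₁ ⊆ (N : Set G) • S₁ := fun y hy => ⟨1, one_mem N, y, hy, one_smul G y⟩
  obtain ⟨X, hX, hact, i, hinj, hequiv⟩ := h ((N : Set G) • S₁) E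
    ((Set.toFinite (N : Set G)).smul hS₁) hE
    (fun n hn _ ⟨k, hk, y, hy, hky⟩ => ⟨n * k, mul_mem hn hk, y, hy, hky ▸ mul_smul n k y⟩) hEL
    fun p hp => ⟨hsub (.inr (.inl ⟨p, hp, rfl⟩)), hsub (.inr (.inr ⟨p, hp, rfl⟩))⟩
  exact ⟨X, hX, hact, i, hinj.mono (Set.subset_union_left.trans hsub), hequiv⟩

theorem of_prod {Z : Type*} [Finite Z] [Nonempty Z] [MulAction G Z]
    (h : FinitelyApproximable G (Y × Z)) : FinitelyApproximable G Y := by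
  intro S E hS hE
  obtain ⟨X, _, _, i, hinj, hequiv⟩ := h (S ×ˢ Set.univ) (Equiv.prodAssoc G Y Z '' E ×ˢ Set.univ)
    (hS.prod Set.finite_univ) ((hE.prod Set.finite_univ).image _)
  refine .of_finite (X := Set X) (i := fun y => Set.range fun z => i (y, z)) ?_ ?_
  · intro s hs t ht hst
    obtain ⟨z⟩ := ‹Nonempty Z›
    obtain ⟨z', hz'⟩ := hst.subset (Set.mem_range_self z)
    exact (congrArg Prod.fst (hinj ⟨ht, trivial⟩ ⟨hs, trivial⟩ hz')).symm
  · rintro ⟨g, y⟩ hgy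
    calc Set.range (fun z => i (g • y, z))
        = Set.range (fun z : Z => i (g • (y, z))) :=
          ((MulAction.surjective g).range_comp fun z => i (g • y, z)).symm
      _ = Set.range (fun z => g • i (y, z)) := congrArg Set.range <| funext fun z =>
          hequiv (g, (y, z)) ⟨((g, y), z), ⟨hgy, trivial⟩, rfl⟩
      _ = g • Set.range (fun z => i (y, z)) := Set.range_smul g _

end FinitelyApproximable

end FiniteApproximation

section Gluing

universe v

open MulAction

variable {C : Type*} [Group C] {T : Type*} [MulAction C T]

theorem exists_bijective_sumElim_smul {X : Type v} [MulAction C X] [IsCancelSMul C X]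
    {f : T →[C] X} (hf : Injective f) :
    ∃ (Ω : Type v) (r : Ω → X), Bijective (Sum.elim f fun p : C × Ω => p.1 • r p.2) := by
  refine ⟨{ω : orbitRel.Quotient C X // ω.out ∉ Set.range f}, fun ω => ω.1.out, ?_, ?_⟩
  · refine hf.sumElim ?_ ?_
    · rintro ⟨c, ω⟩ ⟨c', ω'⟩ heq
      obtain rfl : ω = ω' := Subtype.ext <| by
        rw [← ω.1.out_eq', ← ω'.1.out_eq', Quotient.eq'', orbitRel_apply]
        exact ⟨c⁻¹ * c', (mul_smul _ _ _).trans (inv_smul_eq_iff.2 heq.symm)⟩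
      exact congrArg (·, ω) (IsCancelSMul.right_cancel _ _ _ heq)
    · rintro t ⟨c, ω⟩ heq
      exact ω.2 ⟨c⁻¹ • t, by rw [map_smul, heq, inv_smul_smul]⟩
  · intro x
    obtain ⟨c, hc⟩ : ∃ c : C, c • (⟦x⟧ : orbitRel.Quotient C X).out = x :=
      orbitRel_apply.1 ((orbitRel C X).symm (Quotient.mk_out x))
    by_cases hx : (⟦x⟧ : orbitRel.Quotient C X).out ∈ Set.range f
    · obtain ⟨t, ht⟩ := hx
      exact ⟨.inl (c • t), by rw [Sum.elim_inl, map_smul, ht, hc]⟩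
    · exact ⟨.inr (c, ⟨_, hx⟩), hc⟩

theorem exists_equivariant_equiv [Finite C] {X X' : Type*} [MulAction C X] [IsCancelSMul C X]
    [MulAction C X'] [IsCancelSMul C X'] [Finite X] [Finite X'] (hcard : Nat.card X = Nat.card X')
    {f : T →[C] X} {f' : T →[C] X'} (hf : Injective f) (hf' : Injective f') :
    ∃ e : X ≃ X', (∀ (c : C) x, e (c • x) = c • e x) ∧ ∀ t, e (f t) = f' t := by
  obtain ⟨Ω, r, hr⟩ := exists_bijective_sumElim_smul hf
  obtain ⟨Ω', r', hr'⟩ := exists_bijective_sumElim_smul hf'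
  let b := Equiv.ofBijective _ hr
  let b' := Equiv.ofBijective _ hr'
  have := Finite.of_injective f hf
  have : Finite Ω := .of_injective (fun ω => b (.inr (1, ω))) fun ω ω' h => by
    simpa using b.injective h
  have : Finite Ω' := .of_injective (fun ω => b' (.inr (1, ω))) fun ω ω' h => by
    simpa using b'.injective h
  have hcardΩ : Nat.card Ω = Nat.card Ω' := by
    have hsum : Nat.card T + Nat.card C * Nat.card Ω = Nat.card T + Nat.card C * Nat.card Ω' := by
      rw [← Nat.card_prod, ← Nat.card_prod, ← Nat.card_sum, ← Nat.card_sum, Nat.card_congr b,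
        Nat.card_congr b', hcard]
    exact Nat.eq_of_mul_eq_mul_left Nat.card_pos (Nat.add_left_cancel hsum)
  obtain ⟨ε⟩ := Finite.card_eq.1 hcardΩ
  let e : X ≃ X' := b.symm.trans (((Equiv.refl T).sumCongr ((Equiv.refl C).prodCongr ε)).trans b')
  have hinl : ∀ t, e (f t) = f' t := fun t =>
    congrArg (b' ∘ Sum.map id (Prod.map id ε)) (b.symm_apply_apply (.inl t))
  have hinr : ∀ c ω, e (c • r ω) = c • r' (ε ω) := fun c ω =>
    congrArg (b' ∘ Sum.map id (Prod.map id ε)) (b.symm_apply_apply (.inr (c, ω)))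
  refine ⟨e, fun c x => ?_, hinl⟩
  obtain ⟨t | ⟨d, ω⟩, rfl⟩ := hr.2 x
  · simp only [Sum.elim_inl, ← map_smul, hinl]
  · simp only [Sum.elim_inr, smul_smul, hinr]

variable {ι : Type*} {A : ι → Type*} [∀ j, Group (A j)] {φ : ∀ j, C →* A j}

theorem exists_pushoutI_mulAction_of_card_eq [Finite C] {X : ι → Type*} [∀ j, Finite (X j)]
    [∀ j, MulAction (A j) (X j)] (j₀ : ι) (hcard : ∀ j, Nat.card (X j) = Nat.card (X j₀))
    (hfree : ∀ j c (x : X j), φ j c • x = x → c = 1) {f : ∀ j, T → X j}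
    (hf : ∀ j, Injective (f j)) (hfC : ∀ j (c : C) t, f j (c • t) = φ j c • f j t) :
    ∃ (_ : MulAction (PushoutI φ) (X j₀)) (e : ∀ j, X j ≃ X j₀),
      (∀ j a x, e j (a • x) = PushoutI.of (φ := φ) j a • e j x) ∧
      ∀ j t, e j (f j t) = f j₀ t := by
  let act : ∀ j, MulAction C (X j) := fun j => MulAction.compHom (X j) (φ j)
  have hcancel : ∀ j, IsCancelSMul C (X j) := fun j =>
    isCancelSMul_iff_eq_one_of_smul_eq.2 (hfree j)
  choose e heC hef using fun j => exists_equivariant_equiv (C := C) (hcard j)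
    (f := ⟨f j, hfC j⟩) (f' := ⟨f j₀, hfC j₀⟩) (hf j) (hf j₀)
  let ρ : PushoutI φ →* Equiv.Perm (X j₀) :=
    PushoutI.lift (fun j => (e j).permCongrHom.toMonoidHom.comp (toPermHom (A j) (X j)))
      ((toPermHom (A j₀) (X j₀)).comp (φ j₀)) fun j => by
        ext c w
        exact (heC j c ((e j).symm w)).trans (congrArg _ ((e j).apply_symm_apply w))
  refine ⟨MulAction.compHom _ ρ, e, fun j a x => ?_, hef⟩
  change _ = ρ (PushoutI.of j a) (e j x)
  rw [PushoutI.lift_of]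
  simp

theorem exists_pushoutI_mulAction [Finite ι] [Nonempty ι] [Finite C] {X : ι → Type v}
    [∀ j, Finite (X j)] [∀ j, Nonempty (X j)] [∀ j, MulAction (A j) (X j)]
    (hfree : ∀ j c (x : X j), φ j c • x = x → c = 1) {f : ∀ j, T → X j}
    (hf : ∀ j, Injective (f j)) (hfC : ∀ j (c : C) t, f j (c • t) = φ j c • f j t) :
    ∃ (W : Type v) (_ : Finite W) (_ : MulAction (PushoutI φ) W) (e : ∀ j, X j → W),
      (∀ j, Injective (e j)) ∧ (∀ j a x, e j (a • x) = PushoutI.of (φ := φ) j a • e j x) ∧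
      (∀ j k t, e j (f j t) = e k (f k t)) ∧ ∀ c (w : W), PushoutI.base φ c • w = w → c = 1 := by
  have := Fintype.ofFinite ι
  let n := ∏ j, Nat.card (X j)
  have hn : ∀ j, 0 < n / Nat.card (X j) := fun j =>
    Nat.div_pos (Nat.le_of_dvd (Finset.prod_pos fun j _ => Nat.card_pos)
      (Finset.dvd_prod_of_mem _ (Finset.mem_univ j))) Nat.card_pos
  have hcard : ∀ j, Nat.card (Σ _ : Fin (n / Nat.card (X j)), X j) = n := fun j => by
    rw [Nat.card_congr (Equiv.sigmaEquivProd _ _), Nat.card_prod, Nat.card_fin,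
      Nat.div_mul_cancel (Finset.dvd_prod_of_mem _ (Finset.mem_univ j))]
  let copy : ∀ j, X j → Σ _ : Fin (n / Nat.card (X j)), X j := fun j x => ⟨⟨0, hn j⟩, x⟩
  have hcopy : ∀ j, Injective (copy j) := fun j _ _ h => sigma_mk_injective (β := fun _ => X j) h
  obtain ⟨j₀⟩ := ‹Nonempty ι›
  have hfree' : ∀ j c (x : Σ _ : Fin (n / Nat.card (X j)), X j), φ j c • x = x → c = 1 := by
    rintro j c ⟨m, x⟩ hx
    exact hfree j c x (sigma_mk_injective (β := fun _ => X j) hx)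
  obtain ⟨_, e, hequiv, hef⟩ := exists_pushoutI_mulAction_of_card_eq (φ := φ) j₀
    (fun j => (hcard j).trans (hcard j₀).symm) hfree' (f := fun j t => copy j (f j t))
    (fun j => (hcopy j).comp (hf j)) fun j c t => congrArg (copy j) (hfC j c t)
  refine ⟨_, inferInstance, inferInstance, fun j x => e j (copy j x),
    fun j => (e j).injective.comp (hcopy j), fun j a x => hequiv j a (copy j x),
    fun j k t => (hef j t).trans (hef k t).symm, fun c w hw => ?_⟩
  refine hfree' j₀ c ((e j₀).symm w) ((e j₀).injective ?_)
  rw [hequiv, PushoutI.of_apply_eq_base, Equiv.apply_symm_apply, hw]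

end Gluing

section FiniteAmalgamatedSubgroup

universe u v w

variable {C : Type w} [Group C] {ι : Type*} {A : ι → Type*} [∀ j, Group (A j)] {φ : ∀ j, C →* A j}

theorem closure_iUnion_range_of [Nonempty ι] :
    Submonoid.closure (⋃ j, Set.range (PushoutI.of (φ := φ) j)) = ⊤ := by
  have of_mem : ∀ j a, PushoutI.of j a ∈
      Submonoid.closure (⋃ j, Set.range (PushoutI.of (φ := φ) j)) := fun j a =>
    Submonoid.subset_closure (Set.mem_iUnion.2 ⟨j, a, rfl⟩)
  refine eq_top_iff.2 fun g _ => ?_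
  induction g using PushoutI.induction_on with
  | of j a => exact of_mem j a
  | base c =>
    obtain ⟨j⟩ := ‹Nonempty ι›
    exact PushoutI.of_apply_eq_base φ j c ▸ of_mem j (φ j c)
  | mul x y hx hy => exact mul_mem (hx trivial) (hy trivial)

variable [Finite C]

theorem exists_finite_mulAction_free {A : Type u} [Group A] [Group.ResiduallyFinite A]
    {f : C →* A} (hf : Injective f) :
    ∃ (X : Type max u w) (_ : Finite X) (_ : Nonempty X) (_ : MulAction A X),
      ∀ c (x : X), f c • x = x → c = 1 := by
  choose N hN using fun c : {c : C // c ≠ 1} =>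
    Group.exists_finiteIndexNormalSubgroup_notMem (f c) (by simpa using hf.ne c.2)
  refine ⟨∀ c, A ⧸ (N c).toSubgroup, inferInstance, inferInstance, inferInstance,
    fun c x hx => ?_⟩
  by_contra hc
  obtain ⟨a, ha⟩ := QuotientGroup.mk_surjective (x ⟨c, hc⟩)
  have hfix : ((f c * a : A) : A ⧸ (N ⟨c, hc⟩).toSubgroup) = a := by
    simpa [← ha] using congrFun hx ⟨c, hc⟩
  rw [QuotientGroup.eq_iff_div_mem, mul_div_cancel_right] at hfix
  exact hN ⟨c, hc⟩ hfix

variable [Finite ι] [Nonempty ι]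

theorem HasFiniteApproximation.of_factors {V : Type*} [MulAction (PushoutI φ) V]
    {S : Set V} (hS : ∀ c, ∀ v ∈ S, PushoutI.base φ c • v ∈ S)
    {E : Set (PushoutI φ × V)} (hEL : E ⊆ (⋃ j, Set.range (PushoutI.of j)) ×ˢ Set.univ)
    (hES : ∀ p ∈ E, p.2 ∈ S ∧ p.1 • p.2 ∈ S)
    {X : ι → Type v} [∀ j, Finite (X j)] [∀ j, Nonempty (X j)] [∀ j, MulAction (A j) (X j)]
    (hfree : ∀ j c (x : X j), φ j c • x = x → c = 1)
    {f : ∀ j, V → X j} (hf : ∀ j, S.InjOn (f j))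
    (hfC : ∀ j c, ∀ v ∈ S, f j (PushoutI.base φ c • v) = φ j c • f j v)
    (hfE : ∀ j a v, (PushoutI.of j a, v) ∈ E → f j (PushoutI.of (φ := φ) j a • v) = a • f j v) :
    HasFiniteApproximation S E := by
  let actC : MulAction C V := MulAction.compHom V (PushoutI.base φ)
  let T : SubMulAction C V := ⟨S, fun c _ hv => hS c _ hv⟩
  obtain ⟨W, _, _, e, hinj, hequiv, hglue, -⟩ := exists_pushoutI_mulAction hfree
    (f := fun j (t : T) => f j t) (fun j => (hf j).injective) fun j c t => hfC j c t t.2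
  have j₀ : ι := Classical.arbitrary ι
  refine .of_finite (i := fun v => e j₀ (f j₀ v)) ((hinj j₀).comp_injOn (hf j₀)) fun p hp => ?_
  obtain ⟨j, a, hja⟩ := Set.mem_iUnion.1 (hEL hp).1
  obtain ⟨hsource, htarget⟩ := hES p hp
  calc e j₀ (f j₀ (p.1 • p.2))
      = e j (f j (p.1 • p.2)) := hglue j₀ j ⟨_, htarget⟩
    _ = e j (a • f j p.2) := by rw [← hja, hfE j a p.2 (hja ▸ hp)]
    _ = p.1 • e j (f j p.2) := by rw [hequiv, hja]
    _ = p.1 • e j₀ (f j₀ p.2) := congrArg (p.1 • ·) (hglue j j₀ ⟨_, hsource⟩)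

theorem finitelyApproximable_pushoutI_prod (hφ : ∀ j, Injective (φ j))
    (hA : ∀ j, SubgroupSeparable (A j)) {Y Z : Type*} [MulAction (PushoutI φ) Y]
    [MulAction (PushoutI φ) Z] [Finite Z] [Nonempty Y] [Nonempty Z]
    (hZ : ∀ c (z : Z), PushoutI.base φ c • z = z → c = 1) :
    FinitelyApproximable (PushoutI φ) (Y × Z) := by
  have : Finite (PushoutI.base φ).range := Set.finite_range (PushoutI.base φ)
  refine .of_invariant (PushoutI.base φ).range closure_iUnion_range_of
    fun S E hS hE hinv hEL hES => ?_
  let actY : ∀ j, MulAction (A j) Y := fun j => MulAction.compHom Y (PushoutI.of (φ := φ) j)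
  let actZ : ∀ j, MulAction (A j) Z := fun j => MulAction.compHom Z (PushoutI.of (φ := φ) j)
  let edges : ∀ j, Set (A j × (Y × Z)) := fun j =>
    (Set.range (φ j) ×ˢ S) ∪ Prod.map (PushoutI.of j) id ⁻¹' E
  have hedges : ∀ j, (edges j).Finite := fun j =>
    ((Set.finite_range (φ j)).prod hS).union
      (hE.preimage ((PushoutI.of_injective hφ j).prodMap injective_id).injOn)
  choose X _ _ i hinj hequiv using fun j =>
    (hA j).finitelyApproximable.exists_prodMap (Y := Y) (Z := Z) hS (hedges j)
  have : ∀ j, Nonempty (X j) := fun j => ‹Nonempty Y›.map (i j)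
  refine .of_factors (X := fun j => X j × Z) (f := fun j => Prod.map (i j) id)
    (fun c => hinv _ ⟨c, rfl⟩) hEL hES (fun j c x hx => hZ c x.2 ?_) hinj (fun j c v hv => ?_)
    fun j a v hav => hequiv j (a, v) (.inr hav)
  · rw [← PushoutI.of_apply_eq_base φ j]
    exact congrArg Prod.snd hx
  · exact PushoutI.of_apply_eq_base φ j c ▸ hequiv j (φ j c, v) (.inl ⟨⟨c, rfl⟩, hv⟩)

theorem subgroupSeparable_pushoutI_of_finite (hφ : ∀ j, Injective (φ j))
    (hA : ∀ j, SubgroupSeparable (A j)) : SubgroupSeparable (PushoutI φ) := by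
  have := fun j => (hA j).residuallyFinite
  choose X _ _ _ hX using fun j => exists_finite_mulAction_free (hφ j)
  let actEmpty : MulAction C Empty :=
    { smul := fun _ t => t, one_smul := Empty.rec, mul_smul := fun _ _ => Empty.rec }
  obtain ⟨Z, _, _, e, -, -, -, hZ⟩ := exists_pushoutI_mulAction (f := fun _ => Empty.elim) hX
    (fun _ => injective_of_subsingleton _) fun _ _ => Empty.rec
  have : Nonempty Z := (‹∀ j, Nonempty (X j)› (Classical.arbitrary ι)).map (e _)
  exact fun M hM => finitelySeparable_of_finitelyApproximable hM
    (finitelyApproximable_pushoutI_prod hφ hA hZ).of_prod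

end FiniteAmalgamatedSubgroup

section CharacteristicSubgroups

variable {C : Type*} [Group C]

theorem finite_monoidHom_of_fg [Group.FG C] (Q : Type*) [Group Q] [Finite Q] :
    Finite (C →* Q) := by
  obtain ⟨S, hS, hfin⟩ := Group.fg_iff.1 ‹Group.FG C›
  have := hfin.to_subtype
  refine .of_injective (fun (f : C →* Q) (s : S) => f s) fun f g hfg => ?_
  exact MonoidHom.eq_of_eqOn_dense hS fun s hs => congrFun hfg ⟨s, hs⟩

theorem exists_characteristic_finiteIndex_le [Group.FG C] (U : Subgroup C) [U.FiniteIndex] :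
    ∃ L : Subgroup C, L.Characteristic ∧ L.FiniteIndex ∧ L ≤ U := by
  have := finite_monoidHom_of_fg (C := C) (C ⧸ U.normalCore)
  refine ⟨⨅ f : C →* C ⧸ U.normalCore, f.ker, Subgroup.characteristic_iff_le_comap.2 ?_,
    Subgroup.finiteIndex_iInf fun f => Subgroup.finiteIndex_ker f, ?_⟩
  · exact fun σ x hx => Subgroup.mem_iInf.2 fun f =>
      Subgroup.mem_iInf.1 hx (f.comp σ.toMonoidHom)
  · calc ⨅ f : C →* C ⧸ U.normalCore, f.ker ≤ (QuotientGroup.mk' U.normalCore).ker := iInf_le _ _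
      _ = U.normalCore := QuotientGroup.ker_mk' _
      _ ≤ U := U.normalCore_le

theorem normal_map_of_characteristic {f : C →* G} (hf : Injective f) (hrange : f.range.Normal)
    (L : Subgroup C) [L.Characteristic] : (L.map f).Normal := by
  let e : C ≃* f.range := MonoidHom.ofInjective hf
  refine ⟨?_⟩
  rintro _ ⟨c, hc, rfl⟩ g
  let σ : C ≃* C := (e.trans (MulAut.conjNormal g)).trans e.symm
  refine ⟨σ c, Subgroup.characteristic_iff_le_comap.1 ‹_› σ hc, ?_⟩
  calc f (σ c) = e (σ c) := (MonoidHom.ofInjective_apply hf).symm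
    _ = MulAut.conjNormal g (e c) := congrArg Subtype.val (e.apply_symm_apply _)
    _ = g * f c * g⁻¹ := MulAut.conjNormal_apply g (e c)

theorem SubgroupSeparable.exists_characteristic_notMem_sup (hC : SubgroupSeparable C)
    (hmax : MaxConditionOnSubgroups C) {f : C →* G} (hf : Injective f) (hrange : f.range.Normal)
    {M : Subgroup G} {g : G} (hg : g ∉ M) :
    ∃ L : Subgroup C, L.Characteristic ∧ L.FiniteIndex ∧ g ∉ M ⊔ L.map f := by
  by_cases hgM : g ∈ M ⊔ f.range
  · obtain ⟨m, hm, _, ⟨c, rfl⟩, rfl⟩ := Subgroup.mem_sup_of_normal_right.1 hgM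
    obtain ⟨U, _, hMU, hcU⟩ := finitelySeparable_iff_exists_finiteIndex.1
      (hC (M.comap f) (hmax.fg _)) c fun hc => hg (mul_mem hm hc)
    have : Group.FG C := Group.fg_def.2 (hmax.fg ⊤)
    obtain ⟨L, hLchar, hLfin, hLU⟩ := exists_characteristic_finiteIndex_le U
    refine ⟨L, hLchar, hLfin, fun hmem => hcU ?_⟩
    have := normal_map_of_characteristic hf hrange L
    obtain ⟨m', hm', _, ⟨l, hl, rfl⟩, heq⟩ := Subgroup.mem_sup_of_normal_right.1 hmem
    have hcl : c * l⁻¹ ∈ M.comap f := by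
      have : f (c * l⁻¹) = m⁻¹ * m' := by
        rw [map_mul, map_inv, mul_inv_eq_iff_eq_mul, mul_assoc, heq, inv_mul_cancel_left]
      rw [Subgroup.mem_comap, this]
      exact mul_mem (inv_mem hm) hm'
    exact (U.mul_mem_cancel_right (inv_mem (hLU hl))).1 (hMU hcl)
  · exact ⟨⊤, inferInstance, inferInstance, by rwa [← MonoidHom.range_eq_map]⟩

end CharacteristicSubgroups

section Reduction

variable {ι : Type*} {A : ι → Type*} [∀ j, Group (A j)] {C : Type*} [Group C]
  {φ : ∀ j, C →* A j}

theorem normal_range_base (hφ : ∀ j, (φ j).range.Normal) : (PushoutI.base φ).range.Normal := by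
  constructor
  intro n hn g
  induction g using PushoutI.induction_on generalizing n with
  | of j a =>
    obtain ⟨c, rfl⟩ := hn
    obtain ⟨d, hd⟩ := (hφ j).conj_mem (φ j c) ⟨c, rfl⟩ a
    exact ⟨d, by simp only [← PushoutI.of_apply_eq_base φ j, hd, map_mul, map_inv]⟩
  | base c => exact mul_mem (mul_mem ⟨c, rfl⟩ hn) (inv_mem ⟨c, rfl⟩)
  | mul x y hx hy => simpa only [mul_inv_rev, mul_assoc] using hx _ (hy n hn)

variable (φ) (L : Subgroup C) [L.Normal] [∀ j, (L.map (φ j)).Normal]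

/-- The maps `C ⧸ L → A j ⧸ φ j L` induced by the maps `φ j : C → A j` of an amalgam. -/
def quotientMaps (j : ι) : C ⧸ L →* A j ⧸ L.map (φ j) :=
  QuotientGroup.map L (L.map (φ j)) (φ j) (L.le_comap_map (φ j))

variable {φ} in
theorem quotientMaps_injective (hφ : ∀ j, Injective (φ j)) (j : ι) :
    Injective (quotientMaps φ L j) := by
  rw [← MonoidHom.ker_eq_bot_iff, quotientMaps, QuotientGroup.ker_map,
    Subgroup.comap_map_eq_self_of_injective (hφ j), QuotientGroup.map_mk'_self]

/-- The homomorphism between amalgamated products induced by reducing modulo `L`. -/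
def pushoutIQuotient : PushoutI φ →* PushoutI (quotientMaps φ L) :=
  PushoutI.lift (fun j => (PushoutI.of j).comp (QuotientGroup.mk' (L.map (φ j))))
    ((PushoutI.base _).comp (QuotientGroup.mk' L)) fun j => by
      ext c
      exact PushoutI.of_apply_eq_base (quotientMaps φ L) j (c : C ⧸ L)

theorem ker_pushoutIQuotient_le [(L.map (PushoutI.base φ)).Normal] :
    (pushoutIQuotient φ L).ker ≤ L.map (PushoutI.base φ) := by
  let θ : PushoutI (quotientMaps φ L) →* PushoutI φ ⧸ L.map (PushoutI.base φ) :=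
    PushoutI.lift
      (fun j => QuotientGroup.map _ _ (PushoutI.of j) (by
        rw [← Subgroup.map_le_iff_le_comap, Subgroup.map_map, PushoutI.of_comp_eq_base]))
      (QuotientGroup.map _ _ (PushoutI.base φ) (L.le_comap_map _)) fun j => by
        ext c
        exact congrArg _ (PushoutI.of_apply_eq_base φ j c)
  have hθ : θ.comp (pushoutIQuotient φ L) = QuotientGroup.mk' _ := by
    refine PushoutI.hom_ext (fun j => ?_) ?_
    · ext a
      change θ (pushoutIQuotient φ L (PushoutI.of j a)) = _
      rw [pushoutIQuotient, PushoutI.lift_of]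
      exact PushoutI.lift_of (φ := quotientMaps φ L) _ _ _ (a : A j ⧸ L.map (φ j))
    · ext c
      change θ (pushoutIQuotient φ L (PushoutI.base φ c)) = _
      rw [pushoutIQuotient, PushoutI.lift_base]
      exact PushoutI.lift_base (φ := quotientMaps φ L) _ _ _ (c : C ⧸ L)
  intro g hg
  rw [← QuotientGroup.eq_one_iff, ← QuotientGroup.mk'_apply, ← hθ, MonoidHom.comp_apply, hg,
    map_one]

end Reduction

theorem subgroupSeparable_amalgamatedProduct_general {ι : Type*} [Finite ι] [Nonempty ι]
    {A : ι → Type*} [∀ j, Group (A j)] {C : Type*} [Group C] (φ : ∀ j, C →* A j)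
    (hφ : ∀ j, Injective (φ j)) (hnormal : ∀ j, (φ j).range.Normal)
    (hmax : MaxConditionOnSubgroups C) (hA : ∀ j, SubgroupSeparable (A j)) :
    SubgroupSeparable (PushoutI φ) := by
  refine subgroupSeparable_of_exists_hom fun M _ g hg => ?_
  have hC : SubgroupSeparable C := (hA (Classical.arbitrary ι)).of_injective (hφ _)
  have hbase : Injective (PushoutI.base φ) := PushoutI.base_injective hφ
  obtain ⟨L, _, _, hgL⟩ := hC.exists_characteristic_notMem_sup hmax hbase
    (normal_range_base hnormal) hg
  have := normal_map_of_characteristic hbase (normal_range_base hnormal) L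
  have := fun j => normal_map_of_characteristic (hφ j) (hnormal j) L
  have hquotient : ∀ j, SubgroupSeparable (A j ⧸ L.map (φ j)) := fun j =>
    (hA j).of_surjective (QuotientGroup.mk'_surjective _) <| by
      rw [QuotientGroup.ker_mk']
      exact subgroup_fg_map (hmax.fg L) (φ j)
  refine ⟨_, inferInstance, pushoutIQuotient φ L,
    subgroupSeparable_pushoutI_of_finite (quotientMaps_injective L hφ) hquotient,
    fun hmem => hgL ?_⟩
  rw [← Subgroup.mem_comap, Subgroup.comap_map_eq] at hmem
  exact sup_le_sup_left (ker_pushoutIQuotient_le φ L) M hmem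

section TwoFactors

variable {A B : Type} [Group A] [Group B] {H : Subgroup A} {K : Subgroup B} {φ : H ≃* K}

theorem amalgMaps_injective : ∀ b, Injective (amalgMaps H K φ b)
  | true => H.subtype_injective
  | false => K.subtype_injective.comp φ.injective

theorem normal_range_amalgMaps (hH : H.Normal) (hK : K.Normal) :
    ∀ b, (amalgMaps H K φ b).range.Normal
  | true => H.range_subtype.symm ▸ hH
  | false => by
    have hrange : (amalgMaps H K φ false).range = K := by
      rw [amalgMaps, MonoidHom.range_comp, MonoidHom.range_eq_top.2 φ.surjective,
        ← MonoidHom.range_eq_map, K.range_subtype]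
    exact hrange.symm ▸ hK

end TwoFactors

/-- If `H` and `K` are normal subgroups of `A` and `B` respectively satisfying the maximum
condition for subgroups, and `A` and `B` are subgroup separable, then the generalized free
product `(A ∗ B; H = K, φ)` is subgroup separable. -/
theorem subgroupSeparable_amalgamatedProduct {A B : Type} [Group A] [Group B]
    (H : Subgroup A) (K : Subgroup B) (φ : H ≃* K)
    (hHnormal : H.Normal) (hKnormal : K.Normal)
    (hHmax : MaxConditionOnSubgroups ↥H) (hKmax : MaxConditionOnSubgroups ↥K)
    (hA : SubgroupSeparable A) (hB : SubgroupSeparable B) :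
    SubgroupSeparable (AmalgamatedProduct H K φ) :=
  subgroupSeparable_amalgamatedProduct_general _ amalgMaps_injective
    (normal_range_amalgMaps hHnormal hKnormal) hHmax fun
      | true => hA
      | false => hB
end

section
/- Let m be a positive integer and let n be an integer with |n| = m. Then the Baumslag–Solitar group G(m,n) = ⟨a, b ; a⁻¹bᵐa = bⁿ⟩ is subgroup separable. -/
/-- The single defining relation `a⁻¹ bᵐ a (bⁿ)⁻¹` of the Baumslag–Solitar group, as a
subset of the free group on two generators (`false` plays the role of `a`, `true` of `b`). -/
def bsRel (m n : ℤ) : Set (FreeGroup Bool) :=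
  {(FreeGroup.of false)⁻¹ * (FreeGroup.of true) ^ m * FreeGroup.of false *
    ((FreeGroup.of true) ^ n)⁻¹}

/-- The Baumslag–Solitar group `G(m,n) = ⟨a, b ; a⁻¹ bᵐ a = bⁿ⟩`. -/
abbrev BaumslagSolitar (m n : ℤ) : Type :=
  PresentedGroup (bsRel m n)

/-!
The subgroup `⟨bᵐ⟩` is normal, and a finitely generated `H` meeting it trivially is, for each
`g ∉ H`, contained in some `H⟨bᵐᵏ⟩` with `k ≠ 0` that still omits `g`. So one may assume that `H`
contains some `bᵐᵏ` with `k ≠ 0`; then `b` acts on the cosets of `H` with finite order.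

As in the proof of Marshall Hall's theorem, cut out a finite `b`-invariant set `X` of cosets, large
enough to contain the paths spelled by `g` and by the generators of `H`. The generator `a` is only
partially defined on `X`. To repair this, glue `X` to a mirror copy on which `a` acts as `a⁻¹`,
letting `a` cross between the copies wherever it would leave `X`. Because `n = ±m`, letting `b`
act on the mirror copy as `b` or `b⁻¹` accordingly preserves the defining relation, also at the
crossings. The stabilizer of the base point in this finite action contains `H` and omits `g`.
-/

open Equiv Filter

section Separability

variable {G : Type*} [Group G]

theorem finitelySeparable_of_forall_exists_le {H : Subgroup G}
    (h : ∀ g ∉ H, ∃ K, FinitelySeparable K ∧ H ≤ K ∧ g ∉ K) : FinitelySeparable H := by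
  intro g hg
  obtain ⟨K, hK, hHK, hgK⟩ := h g hg
  obtain ⟨Q, _, _, f, hf, hgf⟩ := hK g hgK
  exact ⟨Q, _, ‹_›, f, hf, fun hmem ↦ hgf (Subgroup.map_mono hHK hmem)⟩

theorem finitelySeparable_of_forall_finset {H : Subgroup G} (hH : H.FG)
    (h : ∀ W : Finset G, ∃ (Z : Type) (_ : Finite Z) (f : G →* Perm Z) (z : Z),
      ∀ w ∈ W, f w z = z ↔ w ∈ H) : FinitelySeparable H := by
  classical
  intro g hg
  obtain ⟨T, rfl⟩ := hH
  obtain ⟨Z, _, f, z, hz⟩ := h (insert g T)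
  let K := (MulAction.stabilizer (Perm Z) z).comap f
  have hTK : Subgroup.closure (T : Set G) ≤ K := (Subgroup.closure_le _).2 fun t ht ↦
    (hz t (Finset.mem_insert_of_mem ht)).2 (Subgroup.subset_closure ht)
  refine ⟨f.range, inferInstance, inferInstance, f.rangeRestrict, f.rangeRestrict_surjective, ?_⟩
  rintro ⟨x, hx, hxg⟩
  have hfx : f x = f g := congrArg Subtype.val hxg
  have hxz : f x z = z := hTK hx
  exact hg ((hz g (Finset.mem_insert_self g T)).1 (hfx ▸ hxz))

theorem mem_normalizer_zpowers_of_semiconjBy {g x y : G} (h : SemiconjBy g x y)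
    (hxy : Subgroup.zpowers x = Subgroup.zpowers y) :
    g ∈ Subgroup.normalizer (Subgroup.zpowers y : Set G) := by
  rw [Subgroup.mem_normalizer_iff_map_conj_eq, ← hxy, MonoidHom.map_zpowers, MonoidHom.coe_coe,
    MulAut.conj_apply, h.eq, mul_inv_cancel_right, hxy]

theorem normal_zpowers_zpow {c : G} (hc : (Subgroup.zpowers c).Normal) (k : ℤ) :
    (Subgroup.zpowers (c ^ k)).Normal where
  conj_mem := by
    rintro _ ⟨r, rfl⟩ x
    obtain ⟨i, hi : c ^ i = x * c * x⁻¹⟩ := hc.conj_mem c (Subgroup.mem_zpowers c) x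
    refine ⟨i * r, ?_⟩
    change (c ^ k) ^ (i * r) = x * (c ^ k) ^ r * x⁻¹
    rw [← zpow_mul, ← zpow_mul, ← conj_zpow, ← hi, ← zpow_mul]
    congr 1
    ring

theorem exists_notMem_sup_zpowers_zpow {c : G} (hc : (Subgroup.zpowers c).Normal)
    {H : Subgroup G} (hH : ∀ k : ℤ, k ≠ 0 → c ^ k ∉ H) {g : G} (hg : g ∉ H) :
    ∃ k : ℤ, k ≠ 0 ∧ g ∉ H ⊔ Subgroup.zpowers (c ^ k) := by
  by_contra! hmem
  have exists_factorization (k : ℤ) (hk : k ≠ 0) : ∃ h ∈ H, ∃ r : ℤ, h * c ^ (k * r) = g := by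
    have := normal_zpowers_zpow hc k
    obtain ⟨h, hh, _, ⟨r, rfl⟩, hr⟩ := Subgroup.mem_sup_of_normal_right.1 (hmem k hk)
    exact ⟨h, hh, r, by rw [zpow_mul]; exact hr⟩
  obtain ⟨h₁, hh₁, r, h₁r⟩ := exists_factorization 1 one_ne_zero
  obtain ⟨h₂, hh₂, s, h₂s⟩ := exists_factorization (|r| + 1) (by positivity)
  rw [one_mul] at h₁r
  have hquot : c ^ (r - (|r| + 1) * s) = h₁⁻¹ * h₂ := by
    rw [zpow_sub, mul_inv_eq_iff_eq_mul, mul_assoc, h₂s, ← h₁r, inv_mul_cancel_left]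
  have hrs : r - (|r| + 1) * s = 0 := by
    by_contra hne
    refine hH _ hne ?_
    rw [hquot]
    exact H.mul_mem (H.inv_mem hh₁) hh₂
  have hr : r = 0 :=
    Int.eq_zero_of_abs_lt_dvd (m := |r| + 1) ⟨s, sub_eq_zero.1 hrs⟩ (lt_add_one _)
  rw [hr, zpow_zero, mul_one] at h₁r
  exact hg (h₁r ▸ hh₁)

theorem subgroupSeparable_of_normal_zpowers {c : G} (hc : (Subgroup.zpowers c).Normal)
    (h : ∀ H : Subgroup G, H.FG → ∀ k : ℤ, k ≠ 0 → c ^ k ∈ H → FinitelySeparable H) :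
    SubgroupSeparable G := by
  intro H hH
  by_cases hHc : ∀ k : ℤ, k ≠ 0 → c ^ k ∉ H
  · refine finitelySeparable_of_forall_exists_le fun g hg ↦ ?_
    obtain ⟨k, hk, hgk⟩ := exists_notMem_sup_zpowers_zpow hc hHc hg
    have hfg : (H ⊔ Subgroup.zpowers (c ^ k)).FG :=
      hH.sup ⟨{c ^ k}, by simp [Subgroup.zpowers_eq_closure]⟩
    exact ⟨_, h _ hfg k hk (Subgroup.mem_sup_right (Subgroup.mem_zpowers _)), le_sup_left, hgk⟩
  · push Not at hHc
    obtain ⟨k, hk, hkH⟩ := hHc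
    exact h H hH k hk hkH

theorem toPermHom_quotient_eq_one_of_normal_zpowers {c : G} (hc : (Subgroup.zpowers c).Normal)
    {H : Subgroup G} (hcH : c ∈ H) : MulAction.toPermHom G (G ⧸ H) c = 1 := by
  rw [← MonoidHom.mem_ker, ← Subgroup.normalCore_eq_ker]
  exact Subgroup.normal_le_normalCore.2 ((Subgroup.zpowers_le).2 hcH) (Subgroup.mem_zpowers c)

end Separability

section Mirror

variable {Y : Type*}

open Classical in
/-- The map underlying `mirrorPerm`, kept separate because its inverse is the same construction
for `σ.symm`. -/
noncomputable def mirrorMap (σ : Perm Y) (X : Set Y) : X ⊕ X → X ⊕ X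
  | .inl x => if h : σ x ∈ X then .inl ⟨σ x, h⟩ else .inr x
  | .inr x => if h : σ.symm x ∈ X then .inr ⟨σ.symm x, h⟩ else .inl x

theorem mirrorMap_symm_leftInverse (σ : Perm Y) (X : Set Y) :
    Function.LeftInverse (mirrorMap σ.symm X) (mirrorMap σ X) := by
  rintro (x | x)
  · by_cases h : σ x ∈ X <;> simp [mirrorMap, h]
  · by_cases h : σ.symm x ∈ X <;> simp [mirrorMap, h]

/-- The completion of the partial permutation that `σ` induces on `X` to a permutation of two
copies of `X`: `σ` acts on the first copy and `σ⁻¹` on the second, and a point that would leave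
`X` crosses to the other copy instead. -/
noncomputable def mirrorPerm (σ : Perm Y) (X : Set Y) : Perm (X ⊕ X) where
  toFun := mirrorMap σ X
  invFun := mirrorMap σ.symm X
  left_inv := mirrorMap_symm_leftInverse σ X
  right_inv := mirrorMap_symm_leftInverse σ.symm X

theorem semiconjBy_mirrorPerm {σ α β : Perm Y} (h : SemiconjBy σ α β) {X : Set Y}
    (hα : ∀ y, α y ∈ X ↔ y ∈ X) (hβ : ∀ y, β y ∈ X ↔ y ∈ X) :
    SemiconjBy (mirrorPerm σ X)
      (Perm.sumCongr (α.subtypePerm hα) (β.subtypePerm hβ))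
      (Perm.sumCongr (β.subtypePerm hβ) (α.subtypePerm hα)) := by
  have hσ (y : Y) : σ (α y) = β (σ y) := DFunLike.congr_fun h.eq y
  have hσ_symm (y : Y) : σ.symm (β y) = α (σ.symm y) := DFunLike.congr_fun h.inv_symm_left.eq y
  ext1 (x | x)
  · by_cases hx : σ x ∈ X <;> simp [mirrorPerm, mirrorMap, hσ, hβ, hx]
  · by_cases hx : σ.symm x ∈ X <;> simp [mirrorPerm, mirrorMap, hσ_symm, hα, hx]

/-- `f` sends `y` to `y'` within the first copy of `X`; that both points lie in `X` is part of the
assertion. It expresses that `f` agrees at `y` with an action on all of `Y`. -/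
def MapsInl {X : Set Y} (f : Perm (X ⊕ X)) (y y' : Y) : Prop :=
  ∃ (h : y ∈ X) (h' : y' ∈ X), f (.inl ⟨y, h⟩) = .inl ⟨y', h'⟩

namespace MapsInl

variable {X : Set Y} {f f' : Perm (X ⊕ X)} {y y' y'' : Y}

theorem one (h : y ∈ X) : MapsInl (1 : Perm (X ⊕ X)) y y :=
  ⟨h, h, rfl⟩

theorem mul (hf : MapsInl f y' y'') (hf' : MapsInl f' y y') : MapsInl (f * f') y y'' := by
  obtain ⟨_, hy'', hfy'⟩ := hf
  obtain ⟨hy, _, hfy⟩ := hf'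
  exact ⟨hy, hy'', by rw [Perm.mul_apply, hfy, hfy']⟩

theorem inv (hf : MapsInl f y y') : MapsInl f⁻¹ y' y := by
  obtain ⟨hy, hy', hfy⟩ := hf
  exact ⟨hy', hy, by rw [Perm.inv_eq_iff_eq, hfy]⟩

theorem apply_eq_self_iff (hf : MapsInl f y y') (h : y ∈ X) :
    f (.inl ⟨y, h⟩) = .inl ⟨y, h⟩ ↔ y' = y := by
  obtain ⟨_, _, hfy⟩ := hf
  simp [hfy]

end MapsInl

theorem mapsInl_mirrorPerm {σ : Perm Y} {X : Set Y} {y : Y} (h : y ∈ X) (h' : σ y ∈ X) :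
    MapsInl (mirrorPerm σ X) y (σ y) :=
  ⟨h, h', by simp [mirrorPerm, mirrorMap, h']⟩

end Mirror

section CycleSaturation

variable {Y : Type*} {τ : Perm Y}

/-- The union of the cycles of `τ` that meet `S`, i.e. the smallest `τ`-invariant set
containing `S`. -/
def cycleSaturation (τ : Perm Y) (S : Finset Y) : Set Y :=
  {y | ∃ s ∈ S, τ.SameCycle s y}

theorem apply_mem_cycleSaturation_iff (S : Finset Y) (y : Y) :
    τ y ∈ cycleSaturation τ S ↔ y ∈ cycleSaturation τ S := by
  simp only [cycleSaturation, Set.mem_ofPred_eq, Perm.sameCycle_apply_right]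

theorem finite_cycleSaturation (hτ : IsOfFinOrder τ) (S : Finset Y) :
    (cycleSaturation τ S).Finite := by
  have hcycle (s : Y) : {y | τ.SameCycle s y}.Finite := by
    refine (hτ.finite_zpowers.image fun ρ : Perm Y ↦ ρ s).subset ?_
    rintro _ ⟨i, rfl⟩
    exact ⟨τ ^ i, ⟨i, rfl⟩, rfl⟩
  refine (S.finite_toSet.biUnion fun s _ ↦ hcycle s).subset ?_
  rintro y ⟨s, hs, hsy⟩
  exact Set.mem_biUnion hs hsy

theorem eventually_mem_cycleSaturation (τ : Perm Y) (y : Y) :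
    ∀ᶠ S in atTop, y ∈ cycleSaturation τ S :=
  (eventually_ge_atTop {y}).mono fun _ hS ↦
    ⟨y, Finset.singleton_subset_iff.1 hS, Perm.SameCycle.refl τ y⟩

end CycleSaturation

namespace BaumslagSolitar

variable {m n : ℤ}

/-- The stable letter `a` of `G(m,n)`. -/
abbrev a : BaumslagSolitar m n := PresentedGroup.of false

/-- The generator `b` of the base group of `G(m,n)`. -/
abbrev b : BaumslagSolitar m n := PresentedGroup.of true

theorem semiconjBy_a : SemiconjBy (a : BaumslagSolitar m n) (b ^ n) (b ^ m) := by
  have hrel : (a⁻¹ * b ^ m * a * (b ^ n)⁻¹ : BaumslagSolitar m n) = 1 :=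
    PresentedGroup.one_of_mem (rels := bsRel m n) rfl
  rw [SemiconjBy, ← mul_inv_eq_one.1 hrel]
  group

section Lift

variable {G : Type*} [Group G] {σ τ : G}

/-- The homomorphism out of `G(m,n)` sending `a` to `σ` and `b` to `τ`. -/
def lift (h : SemiconjBy σ (τ ^ n) (τ ^ m)) : BaumslagSolitar m n →* G :=
  PresentedGroup.toGroup (f := fun i ↦ cond i τ σ) (by
    rintro _ rfl
    simp only [map_mul, map_inv, map_zpow, FreeGroup.lift_apply_of, cond_true, cond_false]
    rw [mul_inv_eq_one, mul_assoc, ← h.eq, inv_mul_cancel_left])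

theorem lift_a (h : SemiconjBy σ (τ ^ n) (τ ^ m)) : lift h a = σ :=
  PresentedGroup.toGroup.of _

theorem lift_b (h : SemiconjBy σ (τ ^ n) (τ ^ m)) : lift h b = τ :=
  PresentedGroup.toGroup.of _

end Lift

theorem normal_zpowers_b_zpow {ε : ℤˣ} (hε : m * ε = n) :
    (Subgroup.zpowers (b ^ m : BaumslagSolitar m n)).Normal := by
  have zpowers_eq : Subgroup.zpowers (b ^ n : BaumslagSolitar m n) = Subgroup.zpowers (b ^ m) := by
    rcases Int.units_eq_one_or ε with rfl | rfl <;> simp [← hε]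
  refine Subgroup.normalizer_eq_top_iff.1 ((Subgroup.eq_top_iff' _).2 ?_)
  refine PresentedGroup.generated_by _ _ ?_
  rintro (_ | _)
  · exact mem_normalizer_zpowers_of_semiconjBy semiconjBy_a zpowers_eq
  · exact mem_normalizer_zpowers_of_semiconjBy (Commute.self_zpow b m) rfl

section MirrorHom

variable {ε : ℤˣ} {Y : Type*}

/-- The permutation of two copies of `X` that acts by `τ` on the first and by `τ ^ ε` on the
second. With `ε = n / m = ±1`, it is the action of `b` that accompanies `mirrorPerm`. -/
def twistedDouble {X : Type*} (τ : Perm X) (ε : ℤˣ) : Perm (X ⊕ X) :=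
  Perm.sumCongr τ (τ ^ (ε : ℤ))

theorem twistedDouble_zpow {X : Type*} (τ : Perm X) (ε : ℤˣ) (k : ℤ) :
    twistedDouble τ ε ^ k = Perm.sumCongr (τ ^ k) (τ ^ (k * ε)) := by
  rw [mul_comm, zpow_mul]
  exact (map_zpow (Perm.sumCongrHom X X) (_, _) k).symm

theorem semiconjBy_mirrorPerm_twistedDouble (hε : m * ε = n) {σ τ : Perm Y}
    (h : SemiconjBy σ (τ ^ n) (τ ^ m)) {X : Set Y} (hX : ∀ y, τ y ∈ X ↔ y ∈ X) :
    SemiconjBy (mirrorPerm σ X) (twistedDouble (τ.subtypePerm hX) ε ^ n)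
      (twistedDouble (τ.subtypePerm hX) ε ^ m) := by
  have hεε : (ε * ε : ℤ) = 1 := by rw [← Units.val_mul, Int.units_mul_self, Units.val_one]
  have hnε : n * ε = m := by rw [← hε, mul_assoc, hεε, mul_one]
  rw [twistedDouble_zpow, twistedDouble_zpow, hε, hnε, Perm.subtypePerm_zpow,
    Perm.subtypePerm_zpow]
  exact semiconjBy_mirrorPerm h _ _

/-- The action of `G(m,n)` on two copies of a `b`-invariant subset `X` of a set on which `G(m,n)`
acts by `ρ`: the mirror completion of the partial action of `a` on `X`, paired with the twisted
double of the action of `b`. -/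
noncomputable def mirrorHom (hε : m * ε = n) (ρ : BaumslagSolitar m n →* Perm Y) {X : Set Y}
    (hX : ∀ y, ρ b y ∈ X ↔ y ∈ X) : BaumslagSolitar m n →* Perm (X ⊕ X) :=
  lift (semiconjBy_mirrorPerm_twistedDouble hε (by simpa using semiconjBy_a.map ρ) hX)

theorem eventually_mapsInl_mirrorHom (hε : m * ε = n) (ρ : BaumslagSolitar m n →* Perm Y)
    (g : BaumslagSolitar m n) (y : Y) :
    ∀ᶠ S in atTop,
      MapsInl (mirrorHom hε ρ (apply_mem_cycleSaturation_iff (τ := ρ b) S) g) y (ρ g y) := by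
  have hg : g ∈ Subgroup.closure (Set.range (PresentedGroup.of (rels := bsRel m n))) := by
    rw [PresentedGroup.closure_range_of]
    exact Subgroup.mem_top g
  induction hg using Subgroup.closure_induction generalizing y with
  | mem _ h =>
    obtain ⟨_ | _, rfl⟩ := h
    · filter_upwards [eventually_mem_cycleSaturation (ρ b) y,
        eventually_mem_cycleSaturation (ρ b) (ρ a y)] with S hy hay
      rw [mirrorHom, lift_a]
      exact mapsInl_mirrorPerm hy hay
    · filter_upwards [eventually_mem_cycleSaturation (ρ b) y] with S hy
      rw [mirrorHom, lift_b]
      exact ⟨hy, (apply_mem_cycleSaturation_iff S y).2 hy, rfl⟩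
  | one =>
    filter_upwards [eventually_mem_cycleSaturation (ρ b) y] with S hy
    simpa only [map_one, Perm.one_apply] using MapsInl.one hy
  | mul u v _ _ hu hv =>
    filter_upwards [hu (ρ v y), hv y] with S hSu hSv
    simpa only [map_mul, Perm.mul_apply] using hSu.mul hSv
  | inv u _ hu =>
    filter_upwards [hu (ρ u⁻¹ y)] with S hSu
    simpa using hSu.inv

theorem exists_finite_perm_hom (hε : m * ε = n) {ρ : BaumslagSolitar m n →* Perm Y}
    (hb : IsOfFinOrder (ρ b)) (y : Y) (W : Finset (BaumslagSolitar m n)) :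
    ∃ (X : Set Y) (_ : X.Finite) (f : BaumslagSolitar m n →* Perm (X ⊕ X)) (z : X ⊕ X),
      ∀ w ∈ W, f w z = z ↔ ρ w y = y := by
  obtain ⟨S, hy, hW⟩ := ((eventually_mem_cycleSaturation (ρ b) y).and
    (W.eventually_all.2 fun w _ ↦ eventually_mapsInl_mirrorHom hε ρ w y)).exists
  exact ⟨_, finite_cycleSaturation hb S, _, .inl ⟨y, hy⟩,
    fun w hw ↦ (hW w hw).apply_eq_self_iff hy⟩

end MirrorHom

theorem finitelySeparable_of_isOfFinOrder {ε : ℤˣ} (hε : m * ε = n)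
    {H : Subgroup (BaumslagSolitar m n)} (hH : H.FG)
    (hb : IsOfFinOrder (MulAction.toPermHom (BaumslagSolitar m n) (BaumslagSolitar m n ⧸ H) b)) :
    FinitelySeparable H := by
  refine finitelySeparable_of_forall_finset hH fun W ↦ ?_
  obtain ⟨X, hX, f, z, hz⟩ :=
    exists_finite_perm_hom hε hb ((1 : BaumslagSolitar m n) : BaumslagSolitar m n ⧸ H) W
  have : Finite X := hX
  refine ⟨X ⊕ X, inferInstance, f, z, fun w hw ↦ (hz w hw).trans ?_⟩
  exact SetLike.ext_iff.1 (MulAction.stabilizer_quotient H) w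

end BaumslagSolitar

theorem subgroupSeparable_baumslagSolitar_general {m n : ℤ} (hm : m ≠ 0) (hmn : |n| = |m|) :
    SubgroupSeparable (BaumslagSolitar m n) := by
  obtain ⟨ε, hε⟩ : Associated m n := Int.associated_iff.2 (abs_eq_abs.1 hmn.symm)
  have hnormal := BaumslagSolitar.normal_zpowers_b_zpow hε
  refine subgroupSeparable_of_normal_zpowers hnormal fun H hH k hk hkH ↦ ?_
  refine BaumslagSolitar.finitelySeparable_of_isOfFinOrder hε hH ?_
  refine isOfFinOrder_iff_zpow_eq_one.2 ⟨m * k, mul_ne_zero hm hk, ?_⟩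
  rw [← map_zpow, zpow_mul]
  exact toPermHom_quotient_eq_one_of_normal_zpowers (normal_zpowers_zpow hnormal k) hkH

/-- If `|n| = m > 0` then the Baumslag–Solitar group `G(m,n)` is subgroup separable. -/
theorem subgroupSeparable_baumslagSolitar (m n : ℤ) (hm : 0 < m) (hn : |n| = m) :
    SubgroupSeparable (BaumslagSolitar m n) :=
  subgroupSeparable_baumslagSolitar_general hm.ne' (hn.trans (abs_of_pos hm).symm)
end

section
/- Let N be a normal subgroup of a group L. If N is finitely generated as a group and L is subgroup separable, then the quotient group L/N is subgroup separable. -/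
section Homomorphism

variable {G G' : Type*} [Group G] [Group G'] {f : G →* G'} {H : Subgroup G'}

theorem exists_fg_map_eq_of_le_range (hHf : H ≤ f.range) (hH : H.FG) :
    ∃ K : Subgroup G, K.FG ∧ K.map f = H := by
  obtain ⟨S, rfl, hS⟩ := (Subgroup.fg_iff H).1 hH
  have hS_image : S ⊆ f '' Set.univ := by
    rw [Set.image_univ]
    exact Subgroup.subset_closure.trans hHf
  obtain ⟨T, -, hT, rfl⟩ := hS.exists_subset_finite_image_eq hS_image
  exact ⟨Subgroup.closure T, (Subgroup.fg_iff _).2 ⟨T, rfl, hT⟩, f.map_closure T⟩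

theorem fg_comap_of_fg_ker (hHf : H ≤ f.range) (hH : H.FG) (hker : f.ker.FG) :
    (H.comap f).FG := by
  obtain ⟨K, hK, rfl⟩ := exists_fg_map_eq_of_le_range hHf hH
  rw [Subgroup.comap_map_eq]
  exact hK.sup hker

theorem apply_mem_map_iff_of_ker_le {K : Subgroup G} (hK : f.ker ≤ K) {g : G} :
    f g ∈ K.map f ↔ g ∈ K := by
  rw [← Subgroup.mem_comap, Subgroup.comap_map_eq_self hK]

theorem FinitelySeparable.of_comap (hf : Function.Surjective f)
    (hH : FinitelySeparable (H.comap f)) : FinitelySeparable H := by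
  intro x hx
  obtain ⟨g, rfl⟩ := hf x
  obtain ⟨Q, _, _, φ, hφ, hg⟩ := hH g hx
  -- Modulo `M := φ(ker f)`, the map `φ` factors through `f`; it still separates `g` from
  -- `H.comap f` because `M ≤ φ(H.comap f)`.
  let M : Subgroup Q := f.ker.map φ
  have : M.Normal := f.normal_ker.map φ hφ
  let π : Q →* Q ⧸ M := QuotientGroup.mk' M
  have hker : f.ker ≤ (π.comp φ).ker := by
    rw [← MonoidHom.comap_ker, QuotientGroup.ker_mk']
    exact f.ker.le_comap_map φ
  let ψ : G' →* Q ⧸ M := f.liftOfSurjective hf ⟨π.comp φ, hker⟩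
  have hψ : ψ.comp f = π.comp φ := f.liftOfRightInverse_comp _ _ _
  have hψ_surj : Function.Surjective (ψ ∘ f) := by
    rw [← MonoidHom.coe_comp, hψ, MonoidHom.coe_comp]
    exact (QuotientGroup.mk'_surjective M).comp hφ
  have hψ_map : H.map ψ = ((H.comap f).map φ).map π := by
    rw [Subgroup.map_map, ← hψ, ← Subgroup.map_map, Subgroup.map_comap_eq_self_of_surjective hf]
  have hπ_ker : π.ker ≤ (H.comap f).map φ := by
    rw [QuotientGroup.ker_mk']
    exact Subgroup.map_mono (f.ker_le_comap H)
  have hψg : ψ (f g) ∉ H.map ψ := by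
    rwa [hψ_map, ← MonoidHom.comp_apply, hψ, MonoidHom.comp_apply,
      apply_mem_map_iff_of_ker_le hπ_ker]
  exact ⟨Q ⧸ M, inferInstance, inferInstance, ψ, hψ_surj.of_comp, hψg⟩

end Homomorphism

/-- If `N` is a finitely generated normal subgroup of a subgroup separable group `L`,
then the quotient `L / N` is subgroup separable. -/
theorem subgroupSeparable_quotient {L : Type*} [Group L] (N : Subgroup L) [N.Normal]
    (hN : N.FG) (hL : SubgroupSeparable L) :
    SubgroupSeparable (L ⧸ N) := by
  have hmk := QuotientGroup.mk'_surjective N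
  have hker : (QuotientGroup.mk' N).ker.FG := by rwa [QuotientGroup.ker_mk']
  intro H hH
  have hcomap : (H.comap (QuotientGroup.mk' N)).FG :=
    fg_comap_of_fg_ker (fun x _ ↦ hmk x) hH hker
  exact .of_comap hmk (hL _ hcomap)
end

section
/- Every non-cyclic free group contains a subgroup which is not finitely separable. -/
/-!
Let `a` and `b` be distinct generators, acting on `ℤ` by the shift `i ↦ i + 1` and the
transposition `(0 1)` respectively. The conjugate `aⁿ b a⁻ⁿ` acts as `(n n+1)`, so it fixes `0` for
every `n > 0`, whereas `b` does not. In a finite quotient of order `n` the image of `aⁿ` is trivial,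
so `aⁿ b a⁻ⁿ` and `b` have the same image: no finite quotient separates `b` from the subgroup
fixing `0`.
-/

theorem not_finitelySeparable_of_conj_pow_mem {G : Type*} [Group G] {H : Subgroup G} {x g : G}
    (hg : g ∉ H) (hconj : ∀ n : ℕ, n ≠ 0 → x ^ n * g * (x ^ n)⁻¹ ∈ H) :
    ¬ FinitelySeparable H := by
  intro hH
  obtain ⟨Q, _, _, f, -, hf⟩ := hH g hg
  have hfx : f (x ^ Nat.card Q) = 1 := by rw [map_pow, pow_card_eq_one']
  have hfg : f (x ^ Nat.card Q * g * (x ^ Nat.card Q)⁻¹) = f g := by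
    simp only [map_mul, map_inv, hfx, one_mul, inv_one, mul_one]
  exact hf (hfg ▸ Subgroup.mem_map_of_mem f (hconj _ Nat.card_pos.ne'))

theorem exists_freeGroup_hom_of_ne {α G : Type*} [Group G] {a b : α} (hab : a ≠ b) (x y : G) :
    ∃ φ : FreeGroup α →* G, φ (FreeGroup.of a) = x ∧ φ (FreeGroup.of b) = y := by
  classical
  exact ⟨FreeGroup.lift (Function.update (fun _ ↦ y) a x), by simp, by simp [hab.symm]⟩

theorem addRight_pow_mul_swap_mul_inv {A : Type*} [AddGroup A] [DecidableEq A] (c i j : A)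
    (n : ℕ) :
    Equiv.addRight c ^ n * Equiv.swap i j * (Equiv.addRight c ^ n)⁻¹ =
      Equiv.swap (i + n • c) (j + n • c) := by
  rw [← Equiv.swap_apply_apply, Equiv.Perm.coe_pow, Equiv.coe_addRight, add_right_iterate]

theorem swap_mem_stabilizer_iff {X : Type*} [DecidableEq X] {i j k : X} :
    Equiv.swap i j ∈ MulAction.stabilizer (Equiv.Perm X) k ↔ i = j ∨ k ≠ i ∧ k ≠ j := by
  rw [MulAction.mem_stabilizer_iff, Equiv.Perm.smul_def, ← not_iff_not, ← ne_eq,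
    Equiv.swap_apply_ne_self_iff]
  tauto

theorem exists_not_finitelySeparable_of_freeGroup_general {α : Type*} [Nontrivial α] :
    ∃ H : Subgroup (FreeGroup α), ¬ FinitelySeparable H := by
  obtain ⟨a, b, hab⟩ := exists_pair_ne α
  obtain ⟨φ, hφa, hφb⟩ :=
    exists_freeGroup_hom_of_ne hab (Equiv.addRight (1 : ℤ)) (Equiv.swap (0 : ℤ) 1)
  refine ⟨(MulAction.stabilizer (Equiv.Perm ℤ) (0 : ℤ)).comap φ,
    not_finitelySeparable_of_conj_pow_mem (x := FreeGroup.of a) (g := FreeGroup.of b) ?_ ?_⟩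
  · rw [Subgroup.mem_comap, hφb, swap_mem_stabilizer_iff]
    omega
  · intro n hn
    rw [Subgroup.mem_comap, map_mul, map_mul, map_inv, map_pow, hφa, hφb,
      addRight_pow_mul_swap_mul_inv, swap_mem_stabilizer_iff, nsmul_one]
    omega

/-- Every non-cyclic free group (a free group on a set with at least two elements)
contains a subgroup which is not finitely separable. -/
theorem exists_not_finitelySeparable_of_freeGroup {α : Type} (hα : ∃ a b : α, a ≠ b) :
    ∃ H : Subgroup (FreeGroup α), ¬ FinitelySeparable H :=
  have : Nontrivial α := ⟨hα⟩
  exists_not_finitelySeparable_of_freeGroup_general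
end
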